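/- The generating function T0(x) of crossing-free trees on points of a circle satisfies T0(x)³ − x·T0(x) + x² = 0, where T0(x) = Σ_n t_n x^n and t_n is the number of crossing-free trees on n labeled points on a circle. Moreover, if B(x) is the generating function of butterflies, then T0(x) = x/(1 − B(x)) and B(x) = T0(x)²/x. -/

import Mathlib

/-- Two chords `(p.1, p.2)` and `(q.1, q.2)` of a circle with vertices labeled
`0, 1, …, n-1` in circular order interleave, i.e. cross, when
`p.1 < q.1 < p.2 < q.2`. -/
def Interleaves {n : ℕ} (p q : Fin n × Fin n) : Prop :=
  p.1 < q.1 ∧ q.1 < p.2 ∧ p.2 < q.2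

instance {n : ℕ} (p q : Fin n × Fin n) : Decidable (Interleaves p q) :=
  inferInstanceAs (Decidable (_ ∧ _ ∧ _))

/-- The number of crossings of a set of chords (each chord recorded with its
endpoints in increasing order): the number of unordered pairs of chords whose
endpoints interleave around the circle. -/
def crossNum {n : ℕ} (D : Finset (Fin n × Fin n)) : ℕ :=
  ((D ×ˢ D).filter fun pq => Interleaves pq.1 pq.2).card

/-- A chord diagram: each chord recorded with its endpoints in increasing
order. -/
def IsDiagram {n : ℕ} (D : Finset (Fin n × Fin n)) : Prop :=
  ∀ p ∈ D, p.1 < p.2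

/-- The graph on the `n` points of the circle whose edges are the chords of the
diagram `D`. -/
def diagGraph {n : ℕ} (D : Finset (Fin n × Fin n)) : SimpleGraph (Fin n) :=
  SimpleGraph.fromRel (fun a b => (a, b) ∈ D)

/-- The generating function `T₀(x)` of crossing-free trees on points of a
circle, where `x` marks the number of vertices: `T₀(x) = Σₙ tₙ xⁿ` with `tₙ`
the number of sets of chords on `n` labeled points of a circle forming a tree
(a connected acyclic graph) with no two chords crossing. -/
noncomputable def treeGF0 : PowerSeries ℚ :=
  PowerSeries.mk fun n => (Nat.card {D : Finset (Fin n × Fin n) //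
    IsDiagram D ∧ crossNum D = 0 ∧ (diagGraph D).IsTree} : ℚ)

open PowerSeries

/-- A predicate on vertices is constant along every chord of `D`. -/
def ConstOnChords (D : Finset (ℕ × ℕ)) (S : ℕ → Prop) : Prop :=
  ∀ p ∈ D, (S p.1 ↔ S p.2)

/-- `D` is a crossing-free tree on the points `a, a + 1, …, b`. Connectedness and acyclicity are
expressed through cuts: a predicate which is constant along chords is constant on the interval, and
every chord is the only one joining the two sides of some cut. -/
structure IsIntervalTree (a b : ℕ) (D : Finset (ℕ × ℕ)) : Prop where
  bounds : ∀ p ∈ D, a ≤ p.1 ∧ p.1 < p.2 ∧ p.2 ≤ b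
  noncrossing : ∀ p ∈ D, ∀ q ∈ D, ¬ (p.1 < q.1 ∧ q.1 < p.2 ∧ p.2 < q.2)
  connected : ∀ S : ℕ → Prop, ConstOnChords D S →
    ∀ x y, a ≤ x → x ≤ b → a ≤ y → y ≤ b → (S x ↔ S y)
  bridges : ∀ e ∈ D, ∃ S : ℕ → Prop, ConstOnChords (D.erase e) S ∧ S e.1 ∧ ¬ S e.2

/-- The tree obtained from trees on `[a, k]`, `[k + 1, d]` and `[d, b]` by adding the chord
`(a, d)`. -/
def glueTrees (a d : ℕ) (D₁ D₂ D₃ : Finset (ℕ × ℕ)) : Finset (ℕ × ℕ) :=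
  insert (a, d) (D₁ ∪ (D₂ ∪ D₃))

theorem mem_glueTrees {a d : ℕ} {D₁ D₂ D₃ : Finset (ℕ × ℕ)} {p : ℕ × ℕ} :
    p ∈ glueTrees a d D₁ D₂ D₃ ↔ p = (a, d) ∨ p ∈ D₁ ∨ p ∈ D₂ ∨ p ∈ D₃ := by
  simp [glueTrees]

namespace IsIntervalTree

theorem exists_chord_over_gap {a b g : ℕ} {D : Finset (ℕ × ℕ)} (h : IsIntervalTree a b D)
    (hag : a ≤ g) (hgb : g < b) : ∃ p ∈ D, p.1 ≤ g ∧ g < p.2 := by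
  by_contra! hno
  have := h.connected (fun x => x ≤ g) (fun p hp => by
    have := h.bounds p hp
    have := hno p hp
    omega) a b le_rfl (by omega) (by omega) le_rfl
  omega

theorem glue {a k d b : ℕ} {D₁ D₂ D₃ : Finset (ℕ × ℕ)} (hak : a ≤ k) (hkd : k < d) (hdb : d ≤ b)
    (h₁ : IsIntervalTree a k D₁) (h₂ : IsIntervalTree (k + 1) d D₂)
    (h₃ : IsIntervalTree d b D₃) : IsIntervalTree a b (glueTrees a d D₁ D₂ D₃) where
  bounds p hp := by
    rcases mem_glueTrees.1 hp with rfl | hp | hp | hp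
    · dsimp only; omega
    · have := h₁.bounds p hp; omega
    · have := h₂.bounds p hp; omega
    · have := h₃.bounds p hp; omega
  noncrossing p hp q hq := by
    have b₁ := h₁.bounds
    have b₂ := h₂.bounds
    have b₃ := h₃.bounds
    rcases mem_glueTrees.1 hp with rfl | hp | hp | hp <;>
      rcases mem_glueTrees.1 hq with rfl | hq | hq | hq <;>
      first
      | exact h₁.noncrossing p hp q hq
      | exact h₂.noncrossing p hp q hq
      | exact h₃.noncrossing p hp q hq
      | grind
  connected S hS x y hax hxb hay hyb := by
    have c₁ := h₁.connected S fun p hp => hS p (mem_glueTrees.2 (by tauto))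
    have c₂ := h₂.connected S fun p hp => hS p (mem_glueTrees.2 (by tauto))
    have c₃ := h₃.connected S fun p hp => hS p (mem_glueTrees.2 (by tauto))
    have had : S a ↔ S d := hS (a, d) (mem_glueTrees.2 (by tauto))
    have key : ∀ z, a ≤ z → z ≤ b → (S z ↔ S d) := by
      intro z haz hzb
      rcases le_or_gt z k with hz | hz
      · exact (c₁ z a haz hz le_rfl hak).trans had
      rcases le_or_gt z d with hz' | hz'
      · exact c₂ z d hz hz' hkd le_rfl
      · exact c₃ z d hz'.le hzb le_rfl hdb
    exact (key x hax hxb).trans (key y hay hyb).symm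
  bridges e he := by
    have b₁ := h₁.bounds
    have b₂ := h₂.bounds
    have b₃ := h₃.bounds
    rcases mem_glueTrees.1 he with rfl | he | he | he
    · refine ⟨fun x => x ≤ k, fun p hp => ?_, hak, by simpa using hkd⟩
      obtain ⟨hne, hp⟩ := Finset.mem_erase.1 hp
      rcases mem_glueTrees.1 hp with rfl | hp | hp | hp <;> grind
    · obtain ⟨S, hS, hS₁, hS₂⟩ := h₁.bridges e he
      refine ⟨fun x => if x ≤ k then S x else S a, fun p hp => ?_, by grind, by grind⟩
      obtain ⟨hne, hp⟩ := Finset.mem_erase.1 hp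
      have := hS p
      rcases mem_glueTrees.1 hp with rfl | hp | hp | hp <;> grind
    · obtain ⟨S, hS, hS₁, hS₂⟩ := h₂.bridges e he
      refine ⟨fun x => if k < x ∧ x ≤ d then S x else S d, fun p hp => ?_, by grind, by grind⟩
      obtain ⟨hne, hp⟩ := Finset.mem_erase.1 hp
      have := hS p
      rcases mem_glueTrees.1 hp with rfl | hp | hp | hp <;> grind
    · obtain ⟨S, hS, hS₁, hS₂⟩ := h₃.bridges e he
      refine ⟨fun x => if d ≤ x then S x else S d, fun p hp => ?_, by grind, by grind⟩
      obtain ⟨hne, hp⟩ := Finset.mem_erase.1 hp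
      have := hS p
      rcases mem_glueTrees.1 hp with rfl | hp | hp | hp <;> grind

theorem exists_maximal_neighbor {a b : ℕ} {D : Finset (ℕ × ℕ)} (h : IsIntervalTree a b D)
    (hab : a < b) : ∃ d, (a, d) ∈ D ∧ ∀ d', (a, d') ∈ D → d' ≤ d := by
  have hne : (D.filter fun p => p.1 = a).Nonempty := by
    obtain ⟨p, hp, hpa, -⟩ := h.exists_chord_over_gap le_rfl hab
    have := h.bounds p hp
    exact ⟨p, Finset.mem_filter.2 ⟨hp, by omega⟩⟩
  obtain ⟨⟨a', d⟩, hp, hmax⟩ := Finset.exists_max_image _ Prod.snd hne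
  obtain ⟨had, ha⟩ := Finset.mem_filter.1 hp
  dsimp only at ha
  subst ha
  exact ⟨d, had, fun d' hd' => hmax (a', d') (Finset.mem_filter.2 ⟨hd', rfl⟩)⟩

theorem le_or_le_of_maximal_neighbor {a b d : ℕ} {D : Finset (ℕ × ℕ)} (h : IsIntervalTree a b D)
    (had : (a, d) ∈ D) (hmax : ∀ d', (a, d') ∈ D → d' ≤ d) {p : ℕ × ℕ} (hp : p ∈ D) :
    p.2 ≤ d ∨ d ≤ p.1 := by
  have hb := h.bounds p hp
  have hc := h.noncrossing (a, d) had p hp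
  obtain ⟨x, y⟩ := p
  by_cases hx : x = a
  · subst hx
    exact Or.inl (hmax y hp)
  · dsimp only at *
    omega

/-- Below the longest chord `(a, d)` at `a` there is a gap which no other chord covers. -/
theorem exists_gap {a b d : ℕ} {D : Finset (ℕ × ℕ)} (h : IsIntervalTree a b D)
    (had : (a, d) ∈ D) (hmax : ∀ d', (a, d') ∈ D → d' ≤ d) :
    ∃ k, a ≤ k ∧ k < d ∧ ∀ p ∈ D, p ≠ (a, d) → p.2 ≤ k ∨ k < p.1 := by
  classical
  obtain ⟨S, hS, hSa, hSd⟩ := h.bridges _ had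
  have hbd := h.bounds _ had
  dsimp only at hSa hSd hbd
  have hne : ((Finset.Ico a d).filter S).Nonempty :=
    ⟨a, Finset.mem_filter.2 ⟨Finset.mem_Ico.2 ⟨le_rfl, hbd.2.1⟩, hSa⟩⟩
  obtain ⟨k, hk, hkmax⟩ := Finset.exists_max_image _ id hne
  simp only [Finset.mem_filter, Finset.mem_Ico, id] at hk hkmax
  obtain ⟨⟨hak, hkd⟩, hSk⟩ := hk
  refine ⟨k, hak, hkd, fun p hp hpne => ?_⟩
  by_contra! hcover
  have hpb := h.bounds p hp
  have hpd : p.2 ≤ d := by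
    have := h.le_or_le_of_maximal_neighbor had hmax hp
    omega
  have hS₂ : ¬ S p.2 := by
    intro hs
    have : p.2 ≠ d := fun he => hSd (he ▸ hs)
    have := hkmax p.2 ⟨by omega, hs⟩
    omega
  have hS₁ : ¬ S p.1 := fun hs => hS₂ ((hS p (Finset.mem_erase.2 ⟨hpne, hp⟩)).1 hs)
  have hne₁ : p.1 ≠ k := fun he => hS₁ (he ▸ hSk)
  have hconst : ConstOnChords D fun m => S m ∧ p.1 < m ∧ m < p.2 := by
    intro q hq
    by_cases hqe : q = (a, d)
    · subst hqe
      dsimp only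
      constructor
      · rintro ⟨-, h1, -⟩; omega
      · rintro ⟨h1, -⟩; exact absurd h1 hSd
    · have hqS := hS q (Finset.mem_erase.2 ⟨hqe, hq⟩)
      have hqb := h.bounds q hq
      have c₁ := h.noncrossing p hp q hq
      have c₂ := h.noncrossing q hq p hp
      by_cases hs : S q.1
      · have hs₂ := hqS.1 hs
        have n₁ : q.1 ≠ p.1 := fun he => hS₁ (he ▸ hs)
        have n₂ : q.1 ≠ p.2 := fun he => hS₂ (he ▸ hs)
        have n₃ : q.2 ≠ p.1 := fun he => hS₁ (he ▸ hs₂)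
        have n₄ : q.2 ≠ p.2 := fun he => hS₂ (he ▸ hs₂)
        simp only [hs, hs₂, true_and]
        omega
      · have hs₂ : ¬ S q.2 := fun hs' => hs (hqS.2 hs')
        simp only [hs, hs₂, false_and]
  have := (h.connected _ hconst k a hak (by omega) le_rfl (by omega)).1 ⟨hSk, by omega, by omega⟩
  omega

/-- A part of a tree on a subinterval `[i, j]` is a tree, provided that the interval is a retract:
the retraction `r` maps both endpoints of every chord outside the part to the same point. -/
theorem of_retract {a b i j : ℕ} {D D' : Finset (ℕ × ℕ)} (h : IsIntervalTree a b D)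
    (hai : a ≤ i) (hjb : j ≤ b) (hsub : D' ⊆ D) (hb : ∀ p ∈ D', i ≤ p.1 ∧ p.2 ≤ j)
    (r : ℕ → ℕ) (hr : ∀ x, i ≤ x → x ≤ j → r x = x)
    (hcollapse : ∀ p ∈ D, p ∈ D' ∨ r p.1 = r p.2) : IsIntervalTree i j D' where
  bounds p hp := by
    have := h.bounds p (hsub hp)
    have := hb p hp
    omega
  noncrossing p hp q hq := h.noncrossing p (hsub hp) q (hsub hq)
  connected S hS x y hix hxj hiy hyj := by
    have := h.connected (fun z => S (r z)) (fun p hp => by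
      beta_reduce
      rcases hcollapse p hp with hp' | he
      · have hpb := hb p hp'
        have := h.bounds p hp
        rw [hr p.1 (by omega) (by omega), hr p.2 (by omega) (by omega)]
        exact hS p hp'
      · rw [he]) x y (by omega) (by omega) (by omega) (by omega)
    rwa [hr x hix hxj, hr y hiy hyj] at this
  bridges e he := by
    obtain ⟨S, hS, hS'⟩ := h.bridges e (hsub he)
    exact ⟨S, fun p hp => hS p (Finset.erase_subset_erase e hsub hp), hS'⟩

theorem exists_eq_glue {a b : ℕ} {D : Finset (ℕ × ℕ)} (h : IsIntervalTree a b D) (hab : a < b) :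
    ∃ k d D₁ D₂ D₃, a ≤ k ∧ k < d ∧ d ≤ b ∧ IsIntervalTree a k D₁ ∧
      IsIntervalTree (k + 1) d D₂ ∧ IsIntervalTree d b D₃ ∧ glueTrees a d D₁ D₂ D₃ = D := by
  obtain ⟨d, had, hmax⟩ := h.exists_maximal_neighbor hab
  obtain ⟨k, hak, hkd, hgap⟩ := h.exists_gap had hmax
  have hbd := h.bounds _ had
  dsimp only at hbd
  have hside : ∀ p ∈ D, p.2 ≤ d ∨ d ≤ p.1 := fun p hp =>
    h.le_or_le_of_maximal_neighbor had hmax hp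
  have hb := h.bounds
  refine ⟨k, d, D.filter fun p => p.2 ≤ k, D.filter fun p => k < p.1 ∧ p.2 ≤ d,
    D.filter fun p => d ≤ p.1, hak, hkd, hbd.2.2, ?_, ?_, ?_, ?_⟩
  · refine h.of_retract le_rfl (by omega) (Finset.filter_subset _ _) (by grind)
      (fun x => if x ≤ k then x else a) (by grind) (by grind)
  · refine h.of_retract (by omega) (by omega) (Finset.filter_subset _ _) (by grind)
      (fun x => if k < x ∧ x ≤ d then x else d) (by grind) (by grind)
  · refine h.of_retract (by omega) le_rfl (Finset.filter_subset _ _) (by grind)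
      (fun x => if d ≤ x then x else d) (by grind) (by grind)
  · ext p
    rw [mem_glueTrees]
    simp only [Finset.mem_filter]
    grind

theorem eq_of_glue_eq {a b k d k' d' : ℕ} {D₁ D₂ D₃ D₁' D₂' D₃' : Finset (ℕ × ℕ)}
    (hak : a ≤ k) (hkd : k < d) (hak' : a ≤ k') (hkd' : k' < d')
    (h₁ : IsIntervalTree a k D₁) (h₂ : IsIntervalTree (k + 1) d D₂) (h₃ : IsIntervalTree d b D₃)
    (h₁' : IsIntervalTree a k' D₁') (h₂' : IsIntervalTree (k' + 1) d' D₂')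
    (h₃' : IsIntervalTree d' b D₃')
    (heq : glueTrees a d D₁ D₂ D₃ = glueTrees a d' D₁' D₂' D₃') :
    k = k' ∧ d = d' ∧ D₁ = D₁' ∧ D₂ = D₂' ∧ D₃ = D₃' := by
  have b₁ := h₁.bounds
  have b₂ := h₂.bounds
  have b₃ := h₃.bounds
  have b₁' := h₁'.bounds
  have b₂' := h₂'.bounds
  have b₃' := h₃'.bounds
  have hmem : ∀ p : ℕ × ℕ, (p = (a, d) ∨ p ∈ D₁ ∨ p ∈ D₂ ∨ p ∈ D₃) ↔
      (p = (a, d') ∨ p ∈ D₁' ∨ p ∈ D₂' ∨ p ∈ D₃') := fun p => by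
    rw [← mem_glueTrees, ← mem_glueTrees, heq]
  have hd : d = d' := by
    have e₁ := hmem (a, d)
    have e₂ := hmem (a, d')
    grind
  subst hd
  have hk : k = k' := by
    rcases lt_trichotomy k k' with hlt | he | hlt
    · obtain ⟨p, hp, hpk⟩ := h₁'.exists_chord_over_gap hak hlt
      have := hmem p
      grind
    · exact he
    · obtain ⟨p, hp, hpk⟩ := h₁.exists_chord_over_gap hak' hlt
      have := hmem p
      grind
  subst hk
  refine ⟨rfl, rfl, ?_, ?_, ?_⟩ <;>
  · ext p
    have := hmem p
    grind

end IsIntervalTree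

open Classical in
/-- The crossing-free trees on the points `a, a + 1, …, b`. -/
noncomputable def intervalTrees (a b : ℕ) : Finset (Finset (ℕ × ℕ)) :=
  (Finset.Icc a b ×ˢ Finset.Icc a b).powerset.filter (IsIntervalTree a b)

theorem mem_intervalTrees {a b : ℕ} {D : Finset (ℕ × ℕ)} :
    D ∈ intervalTrees a b ↔ IsIntervalTree a b D := by
  simp only [intervalTrees, Finset.mem_filter, Finset.mem_powerset, and_iff_right_iff_imp]
  intro h p hp
  have := h.bounds p hp
  simp only [Finset.mem_product, Finset.mem_Icc]
  omega

theorem intervalTrees_self (a : ℕ) : intervalTrees a a = {∅} := by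
  ext D
  rw [mem_intervalTrees, Finset.mem_singleton]
  constructor
  · intro h
    refine Finset.eq_empty_of_forall_notMem fun p hp => ?_
    have := h.bounds p hp
    omega
  · rintro rfl
    refine ⟨by simp, by simp, fun S _ x y _ _ _ _ => ?_, by simp⟩
    rw [show x = y by omega]

theorem card_intervalTrees_succ (a n : ℕ) :
    (intervalTrees a (a + (n + 1))).card =
      ∑ p ∈ Finset.HasAntidiagonal.antidiagonal n, ∑ q ∈ Finset.HasAntidiagonal.antidiagonal p.2,
        (intervalTrees a (a + p.1)).card *
          ((intervalTrees (a + p.1 + 1) (a + p.1 + 1 + q.1)).card *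
            (intervalTrees (a + p.1 + 1 + q.1) (a + p.1 + 1 + q.1 + q.2)).card) := by
  simp only [← Finset.card_product]
  rw [Finset.sum_sigma', ← Finset.card_sigma]
  symm
  refine Finset.card_bij
    (fun x _ => glueTrees a (a + x.1.1.1 + 1 + x.1.2.1) x.2.1 x.2.2.1 x.2.2.2) ?_ ?_ ?_
  · rintro ⟨⟨⟨i, s⟩, ⟨j, l⟩⟩, ⟨D₁, D₂, D₃⟩⟩ hx
    simp only [Finset.mem_sigma, Finset.HasAntidiagonal.mem_antidiagonal, Finset.mem_product,
      mem_intervalTrees] at hx ⊢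
    obtain ⟨⟨rfl, rfl⟩, h₁, h₂, h₃⟩ := hx
    rw [show a + (i + (j + l) + 1) = a + i + 1 + j + l by ring]
    exact h₁.glue (by omega) (by omega) (by omega) h₂ h₃
  · rintro ⟨⟨⟨i, s⟩, ⟨j, l⟩⟩, ⟨D₁, D₂, D₃⟩⟩ hx ⟨⟨⟨i', s'⟩, ⟨j', l'⟩⟩, ⟨D₁', D₂', D₃'⟩⟩ hx' heq
    simp only [Finset.mem_sigma, Finset.HasAntidiagonal.mem_antidiagonal, Finset.mem_product,
      mem_intervalTrees] at hx hx' heq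
    obtain ⟨⟨hn, hs⟩, h₁, h₂, h₃⟩ := hx
    obtain ⟨⟨hn', hs'⟩, h₁', h₂', h₃'⟩ := hx'
    rw [show a + i + 1 + j + l = a + i' + 1 + j' + l' by omega] at h₃
    obtain ⟨hi, hj, rfl, rfl, rfl⟩ := IsIntervalTree.eq_of_glue_eq (by omega) (by omega)
      (by omega) (by omega) h₁ h₂ h₃ h₁' h₂' h₃' heq
    obtain rfl : i = i' := by omega
    obtain rfl : j = j' := by omega
    obtain rfl : s = s' := by omega
    obtain rfl : l = l' := by omega
    rfl
  · intro D hD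
    obtain ⟨k, d, D₁, D₂, D₃, hak, hkd, hdb, h₁, h₂, h₃, rfl⟩ :=
      (mem_intervalTrees.1 hD).exists_eq_glue (by omega)
    obtain ⟨i, rfl⟩ := Nat.exists_eq_add_of_le hak
    obtain ⟨j, rfl⟩ := Nat.exists_eq_add_of_le (Nat.succ_le_of_lt hkd)
    obtain ⟨l, hl⟩ := Nat.exists_eq_add_of_le hdb
    refine ⟨⟨⟨⟨i, j + l⟩, ⟨j, l⟩⟩, ⟨D₁, D₂, D₃⟩⟩, ?_, rfl⟩
    simp only [Finset.mem_sigma, Finset.HasAntidiagonal.mem_antidiagonal, Finset.mem_product,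
      mem_intervalTrees]
    refine ⟨⟨by omega, trivial⟩, h₁, h₂, ?_⟩
    rw [hl] at h₃
    exact h₃

theorem card_intervalTrees_add (n a : ℕ) :
    (intervalTrees a (a + n)).card = (intervalTrees 0 n).card := by
  induction n using Nat.strong_induction_on generalizing a with
  | _ n ih =>
    cases n with
    | zero => simp [intervalTrees_self]
    | succ n =>
      have h0 := card_intervalTrees_succ 0 n
      rw [Nat.zero_add] at h0
      rw [card_intervalTrees_succ, h0]
      refine Finset.sum_congr rfl fun p hp => Finset.sum_congr rfl fun q hq => ?_
      rw [Finset.HasAntidiagonal.mem_antidiagonal] at hp hq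
      simp only [ih p.1 (by omega), ih q.1 (by omega), ih q.2 (by omega)]

theorem card_intervalTrees_zero_succ (n : ℕ) :
    (intervalTrees 0 (n + 1)).card =
      ∑ p ∈ Finset.HasAntidiagonal.antidiagonal n, (intervalTrees 0 p.1).card *
        ∑ q ∈ Finset.HasAntidiagonal.antidiagonal p.2,
          (intervalTrees 0 q.1).card * (intervalTrees 0 q.2).card := by
  have h := card_intervalTrees_succ 0 n
  rw [Nat.zero_add] at h
  simp only [h, card_intervalTrees_add, Finset.mul_sum]

theorem SimpleGraph.reachable_iff_forall_closed {V : Type*} (G : SimpleGraph V) (x y : V) :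
    G.Reachable x y ↔
      ∀ S : V → Prop, (∀ u v, G.Adj u v → (S u ↔ S v)) → S x → S y := by
  constructor
  · rintro ⟨w⟩ S hS hx
    induction w with
    | nil => exact hx
    | cons hadj _ ih => exact ih ((hS _ _ hadj).1 hx)
  · intro h
    refine h (G.Reachable x) (fun u v huv => ?_) (SimpleGraph.Reachable.refl x)
    exact ⟨fun hu => hu.trans huv.reachable, fun hv => hv.trans huv.symm.reachable⟩

theorem diagGraph_adj_iff {n : ℕ} {D : Finset (Fin n × Fin n)} (hD : IsDiagram D) {u v : Fin n} :
    (diagGraph D).Adj u v ↔ (u, v) ∈ D ∨ (v, u) ∈ D := by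
  rw [diagGraph, SimpleGraph.fromRel_adj]
  refine and_iff_right_of_imp ?_
  rintro (h | h)
  · exact (hD _ h).ne
  · exact (hD _ h).ne'

theorem crossNum_eq_zero_iff {n : ℕ} {D : Finset (Fin n × Fin n)} :
    crossNum D = 0 ↔ ∀ p ∈ D, ∀ q ∈ D, ¬ Interleaves p q := by
  simp only [crossNum, Finset.card_eq_zero, Finset.filter_eq_empty_iff, Finset.mem_product]
  exact ⟨fun h p hp q hq => h (x := (p, q)) ⟨hp, hq⟩, fun h x hx => h x.1 hx.1 x.2 hx.2⟩

/-- The chords of a diagram, with endpoints regarded as natural numbers. -/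
def natChords {n : ℕ} (D : Finset (Fin n × Fin n)) : Finset (ℕ × ℕ) :=
  D.map (Fin.valEmbedding.prodMap Fin.valEmbedding)

theorem natChords_injective (n : ℕ) : Function.Injective (natChords (n := n)) :=
  Finset.map_injective _

theorem mem_natChords {n : ℕ} {D : Finset (Fin n × Fin n)} {p : ℕ × ℕ} :
    p ∈ natChords D ↔ ∃ q ∈ D, ((q.1 : ℕ), (q.2 : ℕ)) = p := by
  simp only [natChords, Finset.mem_map]
  rfl

theorem forall_mem_natChords {n : ℕ} {D : Finset (Fin n × Fin n)} {Q : ℕ × ℕ → Prop} :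
    (∀ p ∈ natChords D, Q p) ↔ ∀ q ∈ D, Q (q.1, q.2) := by
  simp only [mem_natChords]
  grind

theorem forall_adj_iff {n : ℕ} {D : Finset (Fin n × Fin n)} (hD : IsDiagram D)
    (S : Fin n → Prop) :
    (∀ u v, (diagGraph D).Adj u v → (S u ↔ S v)) ↔ ∀ q ∈ D, (S q.1 ↔ S q.2) := by
  simp only [diagGraph_adj_iff hD]
  grind

theorem isBridge_diagGraph_iff {n : ℕ} {D : Finset (Fin n × Fin n)} (hD : IsDiagram D)
    {e : Fin n × Fin n} (he : e ∈ D) :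
    (diagGraph D).IsBridge s(e.1, e.2) ↔
      ∃ S : Fin n → Prop, (∀ q ∈ D, q ≠ e → (S q.1 ↔ S q.2)) ∧ S e.1 ∧ ¬ S e.2 := by
  have hadj : ∀ u v, ((diagGraph D).deleteEdges {s(e.1, e.2)}).Adj u v ↔
      ((u, v) ∈ D ∧ (u, v) ≠ e) ∨ ((v, u) ∈ D ∧ (v, u) ≠ e) := by
    intro u v
    have h₁ := hD (u, v)
    have h₂ := hD (v, u)
    have h₃ := hD e he
    obtain ⟨e₁, e₂⟩ := e
    simp only [SimpleGraph.deleteEdges_adj, diagGraph_adj_iff hD,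
      Set.mem_singleton_iff, Sym2.eq_iff, ne_eq, Prod.mk.injEq]
    dsimp only at h₁ h₂ h₃
    grind
  rw [SimpleGraph.isBridge_iff, SimpleGraph.reachable_iff_forall_closed]
  simp only [hadj]
  push Not
  refine exists_congr fun S => and_congr_left fun _ => ?_
  constructor
  · exact fun h q hq hne => h q.1 q.2 (Or.inl ⟨hq, hne⟩)
  · rintro h u v (⟨huv, hne⟩ | ⟨hvu, hne⟩)
    · exact h _ huv hne
    · exact (h _ hvu hne).symm

theorem isIntervalTree_natChords_iff {n : ℕ} {D : Finset (Fin (n + 1) × Fin (n + 1))} :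
    IsIntervalTree 0 n (natChords D) ↔
      IsDiagram D ∧ crossNum D = 0 ∧ (diagGraph D).IsTree := by
  have hext : ∀ S : Fin (n + 1) → Prop, ∃ S' : ℕ → Prop, ∀ x : Fin (n + 1), S' x ↔ S x :=
    fun S => ⟨fun m => ∃ h : m < n + 1, S ⟨m, h⟩, 
      fun x => ⟨fun h => h.2, fun h => ⟨x.2, h⟩⟩⟩
  constructor
  · intro h
    have hD : IsDiagram D := fun p hp => (forall_mem_natChords.1 h.bounds p hp).2.1
    refine ⟨hD, crossNum_eq_zero_iff.2 fun p hp q hq => ?_, ?_, ?_⟩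
    · exact h.noncrossing _ (mem_natChords.2 ⟨p, hp, rfl⟩) _ (mem_natChords.2 ⟨q, hq, rfl⟩)
    · rw [SimpleGraph.connected_iff]
      refine ⟨fun x y => ?_, inferInstance⟩
      rw [SimpleGraph.reachable_iff_forall_closed]
      intro S hS
      rw [forall_adj_iff hD] at hS
      obtain ⟨S', hS'⟩ := hext S
      have := h.connected S' (forall_mem_natChords.2 fun q hq => by
        simpa only [hS'] using hS q hq) x y (Nat.zero_le _) (by omega) (Nat.zero_le _) (by omega)
      rw [hS', hS'] at this
      exact this.1
    · rw [SimpleGraph.isAcyclic_iff_forall_isBridge]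
      have key : ∀ e ∈ D, (diagGraph D).IsBridge s(e.1, e.2) := by
        intro e he
        obtain ⟨S, hS, hS'⟩ := h.bridges _ (mem_natChords.2 ⟨e, he, rfl⟩)
        refine (isBridge_diagGraph_iff hD he).2 ⟨fun x => S x, fun q hq hne => ?_, hS'⟩
        refine hS (q.1, q.2) (Finset.mem_erase.2 ⟨fun heq => hne ?_, mem_natChords.2 ⟨q, hq, rfl⟩⟩)
        rw [Prod.mk.injEq] at heq
        exact Prod.ext (Fin.ext heq.1) (Fin.ext heq.2)
      intro e
      induction e with
      | _ u v =>
        intro he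
        rw [SimpleGraph.mem_edgeSet, diagGraph_adj_iff hD] at he
        rcases he with he | he
        · exact key _ he
        · rw [Sym2.eq_swap]
          exact key _ he
  · rintro ⟨hD, hcross, htree⟩
    rw [crossNum_eq_zero_iff] at hcross
    refine ⟨?_, ?_, ?_, ?_⟩
    · exact forall_mem_natChords.2 fun q hq => ⟨Nat.zero_le _, hD q hq, by dsimp only; omega⟩
    · exact forall_mem_natChords.2 fun p hp => forall_mem_natChords.2 fun q hq => hcross p hp q hq
    · intro S hS x y _ hx _ hy
      have hS' := (forall_adj_iff hD fun x => S x).2 (forall_mem_natChords.1 hS)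
      have hr := fun u v => ((diagGraph D).reachable_iff_forall_closed u v).1
        (htree.connected.preconnected u v) (fun x => S x) hS'
      exact ⟨hr ⟨x, by omega⟩ ⟨y, by omega⟩, hr ⟨y, by omega⟩ ⟨x, by omega⟩⟩
    · refine forall_mem_natChords.2 fun e he => ?_
      have hbr := SimpleGraph.isAcyclic_iff_forall_isBridge.1 htree.isAcyclic
        (e := s(e.1, e.2)) ((SimpleGraph.mem_edgeSet _).2 ((diagGraph_adj_iff hD).2 (Or.inl he)))
      obtain ⟨S, hS, hS₁, hS₂⟩ := (isBridge_diagGraph_iff hD he).1 hbr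
      obtain ⟨S', hS'⟩ := hext S
      refine ⟨S', fun p hp => ?_, (hS' _).2 hS₁, fun h => hS₂ ((hS' _).1 h)⟩
      obtain ⟨hne, hp⟩ := Finset.mem_erase.1 hp
      obtain ⟨q, hq, rfl⟩ := mem_natChords.1 hp
      simp only [hS']
      exact hS q hq fun heq => hne (by rw [heq])

theorem IsIntervalTree.exists_natChords_eq {n : ℕ} {E : Finset (ℕ × ℕ)}
    (h : IsIntervalTree 0 n E) : ∃ D : Finset (Fin (n + 1) × Fin (n + 1)), natChords D = E := by
  refine ⟨Finset.univ.filter fun q => ((q.1 : ℕ), (q.2 : ℕ)) ∈ E, ?_⟩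
  ext p
  rw [mem_natChords]
  constructor
  · rintro ⟨q, hq, rfl⟩
    exact (Finset.mem_filter.1 hq).2
  · intro hp
    have := h.bounds p hp
    exact ⟨(⟨p.1, by omega⟩, ⟨p.2, by omega⟩), by simpa using hp, rfl⟩

theorem natCard_diagramTrees_succ (n : ℕ) :
    Nat.card {D : Finset (Fin (n + 1) × Fin (n + 1)) //
      IsDiagram D ∧ crossNum D = 0 ∧ (diagGraph D).IsTree} = (intervalTrees 0 n).card := by
  rw [← Nat.card_eq_finsetCard]
  refine Nat.card_congr (Equiv.ofBijective (fun D => ⟨natChords D.1,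
    mem_intervalTrees.2 (isIntervalTree_natChords_iff.2 D.2)⟩) ⟨fun D D' h => ?_, fun E => ?_⟩)
  · exact Subtype.ext (natChords_injective _ (congrArg Subtype.val h))
  · have hE := mem_intervalTrees.1 E.2
    obtain ⟨D, hD⟩ := hE.exists_natChords_eq
    exact ⟨⟨D, isIntervalTree_natChords_iff.1 (hD.symm ▸ hE)⟩, Subtype.ext hD⟩

theorem coeff_zero_treeGF0 : coeff 0 treeGF0 = 0 := by
  rw [treeGF0, coeff_mk, Nat.cast_eq_zero, Nat.card_eq_zero]
  left
  refine ⟨fun D => ?_⟩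
  obtain ⟨x⟩ := D.2.2.2.connected.nonempty
  exact x.elim0

theorem treeGF0_eq_X_mul :
    treeGF0 = X * PowerSeries.mk fun n => ((intervalTrees 0 n).card : ℚ) := by
  ext n
  cases n with
  | zero => rw [coeff_zero_treeGF0, coeff_zero_X_mul]
  | succ n => rw [coeff_succ_X_mul, coeff_mk, treeGF0, coeff_mk, natCard_diagramTrees_succ]

theorem intervalTrees_functional_equation :
    (PowerSeries.mk fun n => ((intervalTrees 0 n).card : ℚ)) =
      1 + X * (PowerSeries.mk fun n => ((intervalTrees 0 n).card : ℚ)) ^ 3 := by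
  ext n
  cases n with
  | zero => simp [intervalTrees_self]
  | succ n =>
    rw [map_add, coeff_succ_X_mul, pow_succ', pow_two, coeff_mul]
    simp only [coeff_mul, coeff_mk, card_intervalTrees_zero_succ, coeff_one, Nat.succ_ne_zero,
      if_false, zero_add]
    push_cast
    rfl

/-- The generating function `T₀(x)` of crossing-free trees satisfies
`T₀³ − x·T₀ + x² = 0`. Moreover, if `B(x)` is the generating function of
butterflies — i.e. the series determined by the decomposition
`B(x) = T₀(x)²/x` of a butterfly into an ordered pair of crossing-free trees
with a common root counted once — then `T₀(x) = x/(1 − B(x))`. -/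
theorem treeGF0_algebraic_equation :
    treeGF0 ^ 3 - (X : PowerSeries ℚ) * treeGF0 + X ^ 2 = 0 ∧
    ∀ B : PowerSeries ℚ, X * B = treeGF0 ^ 2 → treeGF0 * (1 - B) = X := by
  have hcubic : treeGF0 ^ 3 - (X : PowerSeries ℚ) * treeGF0 + X ^ 2 = 0 := by
    rw [treeGF0_eq_X_mul]
    linear_combination (-(X : PowerSeries ℚ) ^ 2) * intervalTrees_functional_equation
  refine ⟨hcubic, fun B hB => ?_⟩
  have hX : (X : PowerSeries ℚ) ≠ 0 := X_ne_zero
  refine mul_left_cancel₀ hX ?_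
  linear_combination (-treeGF0) * hB - hcubic
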